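/- The number of snakes of type B_n equals the n-th coefficient of the exponential generating function 1/(cos x - sin x); that is, if b_n denotes the number of sequences (x_1,...,x_n) of integers with 1 ≤ |x_i| ≤ n, x_i ≠ ±x_j for i ≠ j, and 0 < x_1 > x_2 < x_3 > ..., then ∑ b_n x^n/n! = 1/(cos x - sin x). -/

import Mathlib

/-- A snake of type `B_n`: a sequence of integers `x_1, …, x_n` (indexed here by
`Fin n`, so `x ⟨0⟩` is `x_1`) with `1 ≤ |x_i| ≤ n`, `x_i ≠ ±x_j` for `i ≠ j`,
and `0 < x_1 > x_2 < x_3 > ⋯` alternating. -/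
def IsTypeBSnake (n : ℕ) (x : Fin n → ℤ) : Prop :=
  (∀ i, 1 ≤ |x i| ∧ |x i| ≤ (n : ℤ)) ∧
  (∀ i j, i ≠ j → x i ≠ x j ∧ x i ≠ -x j) ∧
  (∀ h : 0 < n, 0 < x ⟨0, h⟩) ∧
  (∀ i : ℕ, ∀ h : i + 1 < n,
    (Even i → x ⟨i + 1, h⟩ < x ⟨i, Nat.lt_of_succ_lt h⟩) ∧
    (¬ Even i → x ⟨i, Nat.lt_of_succ_lt h⟩ < x ⟨i + 1, h⟩))

/-- The `n`-th Springer number: the number of snakes of type `B_n`. -/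
noncomputable def springer (n : ℕ) : ℕ := Nat.card {x : Fin n → ℤ // IsTypeBSnake n x}

open Finset
open scoped Pointwise

/-!
After changing the sign of every other entry, a snake is a signed permutation `z` of `1, …, n` with
`z₁ > 0` and all `zᵢ + zᵢ₊₁ > 0`. For a finite set `S` of positive letters let `F(S, t)` count such
words that use each letter of `S` once up to sign and satisfy `t + z₁ > 0` instead of `z₁ > 0`.
Splitting by the first letter gives, for a positive `t ∉ S`,
`F(S, t) = F(S, 0) + ∑_{a < t} F(S \ {a}, -a)` and `F(S, -t) = F(S, 0) - ∑_{a < t} F(S \ {a}, a)`.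
On iterating, the letters split off form a decreasing sequence `t > a₁ > a₂ > ⋯`, that is, a subset
`T` of `S`, and the signs produced are the Taylor coefficients of `cos + sin` and `cos - sin`.
Together with `F(S, 0) = ∑_{a ∈ S} F(S \ {a}, a)` for `S ≠ ∅`, this yields
`∑_{T ⊆ S} ε(|T|) F(S \ T, 0) = 0`, where `ε(k) = (-1) ^ ⌊(k + 1) / 2⌋` is the `k`-th derivative of
`cos - sin` at `0`. By the Leibniz rule, the derivatives of `1 / (cos - sin)` at `0` satisfy the
same recurrence.
-/

section FinsetSums

variable {α R : Type*}

theorem sum_powerset_eq_add_sum_max [LinearOrder α] [AddCommMonoid R] (U : Finset α)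
    (h : Finset α → R) :
    ∑ T ∈ U.powerset, h T =
      h ∅ + ∑ a ∈ U, ∑ T ∈ (U.filter (· < a)).powerset, h (insert a T) := by
  induction U using Finset.induction_on_max with
  | empty => simp
  | insert m U hm ih =>
    have hmU : m ∉ U := fun h => lt_irrefl _ (hm m h)
    have filter_lt_max : (insert m U).filter (· < m) = U := by
      rw [filter_insert, if_neg (lt_irrefl m), filter_true_of_mem hm]
    have filter_lt_mem : ∀ a ∈ U, (insert m U).filter (· < a) = U.filter (· < a) := fun a ha => by
      rw [filter_insert, if_neg (hm a ha).not_gt]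
    rw [sum_powerset_insert hmU, ih, sum_insert hmU, filter_lt_max,
      sum_congr rfl fun a ha => by rw [← filter_lt_mem a ha], add_right_comm, add_assoc]

theorem sum_powerset_mul_sdiff_eq_add_sum_max [LinearOrder α] [NonUnitalNonAssocSemiring R]
    (c : ℕ → R) (φ : Finset α → R) {U S : Finset α} (hUS : U ⊆ S)
    (hU : ∀ a ∈ U, ∀ b ∈ S, b < a → b ∈ U) :
    ∑ T ∈ U.powerset, c #T * φ (S \ T) =
      c 0 * φ S + ∑ a ∈ U, ∑ T ∈ ((S.erase a).filter (· < a)).powerset,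
        c (#T + 1) * φ (S.erase a \ T) := by
  rw [sum_powerset_eq_add_sum_max, card_empty, sdiff_empty]
  refine congrArg _ (sum_congr rfl fun a ha => ?_)
  have filter_lt : U.filter (· < a) = (S.erase a).filter (· < a) := by grind
  rw [filter_lt]
  refine sum_congr rfl fun T hT => ?_
  have haT : a ∉ T := by grind
  rw [card_insert_of_notMem haT, sdiff_insert, erase_sdiff_comm]

theorem eq_of_sum_powerset_mul_sdiff_eq [DecidableEq α] [NonUnitalNonAssocRing R]
    {c : Finset α → R} (hc : IsLeftRegular (c ∅)) {φ ψ : Finset α → R} {S : Finset α}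
    (h : ∀ U ⊆ S, ∑ T ∈ U.powerset, c T * φ (U \ T) = ∑ T ∈ U.powerset, c T * ψ (U \ T)) :
    φ S = ψ S := by
  induction S using Finset.strongInduction with
  | H S ih =>
    have agree_sdiff : ∀ T ∈ S.powerset.erase ∅, c T * φ (S \ T) = c T * ψ (S \ T) := by
      intro T hT
      obtain ⟨hT, hTS⟩ := mem_erase.1 hT
      have hss := sdiff_ssubset (mem_powerset.1 hTS) (nonempty_iff_ne_empty.2 hT)
      rw [ih _ hss fun U hU => h U (hU.trans hss.subset)]
    have hS := h S subset_rfl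
    rw [← add_sum_erase _ _ (empty_mem_powerset S), ← add_sum_erase _ _ (empty_mem_powerset S),
      sum_congr rfl agree_sdiff, sdiff_empty] at hS
    exact hc (add_right_cancel hS)

variable [AddCommGroup α] [LinearOrder α] [IsOrderedAddMonoid α]

theorem mem_union_neg_iff_abs_mem {S : Finset α} (hS : ∀ a ∈ S, 0 < a) {y : α} :
    y ∈ S ∪ -S ↔ |y| ∈ S := by
  rw [mem_union, mem_neg']
  rcases abs_cases y with ⟨h, _⟩ | ⟨h, _⟩ <;> grind

theorem sum_union_neg [AddCommMonoid R] {S : Finset α} (hS : ∀ a ∈ S, 0 < a) (f : α → R) :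
    ∑ y ∈ S ∪ -S, f y = ∑ a ∈ S, (f a + f (-a)) := by
  have hdisj : Disjoint S (-S) := disjoint_left.2 fun a ha hna => by
    have := hS _ (mem_neg'.1 hna)
    have := hS a ha
    grind
  rw [sum_union hdisj, ← image_neg_eq_neg, sum_image neg_injective.injOn, sum_add_distrib]

end FinsetSums

section Snakes

variable {α : Type*} [AddCommGroup α] [LinearOrder α] {n : ℕ} {S : Finset α} {t : α}

/-- A snake over the letters `S` continuing `t`, after the sign changes that make all of its
inequalities alike: a word whose letters have distinct absolute values in `S`, such that any two
adjacent letters of the word preceded by `t` have positive sum. Taking `t = 0` expresses that the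
first letter is positive. -/
def IsSnakeFrom (S : Finset α) (t : α) (z : Fin n → α) : Prop :=
  (∀ i, |z i| ∈ S) ∧ Function.Injective (abs ∘ z) ∧
    ∀ i : Fin n, 0 < (Fin.cons t z : Fin (n + 1) → α) i.castSucc + z i

/-- The number of snakes continuing `t` that use every letter of `S` exactly once up to sign, the
analogue for an arbitrary alphabet of the entries of Arnold's triangle of Springer numbers. -/
noncomputable def numSnakes (S : Finset α) (t : α) : ℕ :=
  Nat.card {z : Fin #S → α // IsSnakeFrom S t z}

theorem isSnakeFrom_cons {y : α} {z : Fin n → α} :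
    IsSnakeFrom S t (Fin.cons y z : Fin (n + 1) → α) ↔
      (|y| ∈ S ∧ 0 < t + y) ∧ IsSnakeFrom (S.erase |y|) y z := by
  simp only [IsSnakeFrom, Fin.forall_fin_succ, Fin.cons_zero, Fin.cons_succ, Fin.castSucc_zero,
    ← Fin.succ_castSucc, Fin.comp_cons, Fin.cons_injective_iff, Set.mem_range, not_exists,
    Function.comp_apply, mem_erase, forall_and]
  tauto

instance finite_isSnakeFrom : Finite {z : Fin n → α // IsSnakeFrom S t z} := by
  refine ((Fintype.piFinset fun _ => S ∪ -S).finite_toSet.subset fun z hz => ?_).to_subtype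
  simp only [mem_coe, Fintype.mem_piFinset, mem_union, mem_neg']
  intro i
  rcases abs_choice (z i) with h | h
  · exact .inl (h ▸ hz.1 i)
  · exact .inr (h ▸ hz.1 i)

theorem card_isSnakeFrom_of_card_eq (h : #S = n) :
    Nat.card {z : Fin n → α // IsSnakeFrom S t z} = numSnakes S t := by
  subst h
  rfl

theorem numSnakes_empty : numSnakes (∅ : Finset α) t = 1 := by
  rw [← card_isSnakeFrom_of_card_eq card_empty, Nat.card_eq_one_iff_unique]
  exact ⟨inferInstance, ⟨Fin.elim0, fun i => i.elim0, fun i => i.elim0, fun i => i.elim0⟩⟩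

/-- Splitting a nonempty snake into its first entry and the remaining snake. -/
def snakeConsEquiv [IsOrderedAddMonoid α] (hS : ∀ a ∈ S, 0 < a) :
    {z : Fin (n + 1) → α // IsSnakeFrom S t z} ≃
      Σ y : {y // y ∈ (S ∪ -S).filter (0 < t + ·)},
        {w : Fin n → α // IsSnakeFrom (S.erase |y.1|) y.1 w} where
  toFun z :=
    have hz := isSnakeFrom_cons.1 ((Fin.cons_self_tail z.1).symm ▸ z.2)
    ⟨⟨z.1 0, mem_filter.2 (hz.1.imp_left (mem_union_neg_iff_abs_mem hS).2)⟩, Fin.tail z.1, hz.2⟩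
  invFun p := ⟨Fin.cons p.1.1 p.2.1, isSnakeFrom_cons.2
    ⟨(mem_filter.1 p.1.2).imp_left (mem_union_neg_iff_abs_mem hS).1, p.2.2⟩⟩
  left_inv z := by simp
  right_inv _ := rfl

variable [IsOrderedAddMonoid α]

theorem numSnakes_eq_sum (hS : ∀ a ∈ S, 0 < a) (hne : S.Nonempty) :
    numSnakes S t = ∑ a ∈ S, ((if 0 < t + a then numSnakes (S.erase a) a else 0) +
      if 0 < t - a then numSnakes (S.erase a) (-a) else 0) := by
  obtain ⟨n, hn⟩ := Nat.exists_eq_succ_of_ne_zero hne.card_ne_zero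
  have card_tails (y : {y // y ∈ (S ∪ -S).filter (0 < t + ·)}) :
      Nat.card {w : Fin n → α // IsSnakeFrom (S.erase |y.1|) y.1 w} =
        numSnakes (S.erase |y.1|) y.1 := by
    have hy := (mem_union_neg_iff_abs_mem hS).1 (mem_filter.1 y.2).1
    exact card_isSnakeFrom_of_card_eq (by rw [card_erase_of_mem hy, hn, Nat.succ_sub_one])
  rw [← card_isSnakeFrom_of_card_eq hn, Nat.card_congr (snakeConsEquiv hS), Nat.card_sigma,
    sum_congr rfl fun y _ => card_tails y,
    sum_coe_sort _ fun y => numSnakes (S.erase |y|) y, sum_filter, sum_union_neg hS]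
  refine sum_congr rfl fun a ha => ?_
  rw [abs_neg, abs_of_pos (hS a ha), sub_eq_add_neg]

theorem numSnakes_zero (hS : ∀ a ∈ S, 0 < a) (hne : S.Nonempty) :
    numSnakes S 0 = ∑ a ∈ S, numSnakes (S.erase a) a := by
  rw [numSnakes_eq_sum hS hne]
  refine sum_congr rfl fun a ha => ?_
  have := hS a ha
  rw [if_pos (by simpa), if_neg (by simpa using this.le), add_zero]

theorem numSnakes_of_pos (hS : ∀ a ∈ S, 0 < a) (ht : 0 < t) :
    numSnakes S t = numSnakes S 0 + ∑ a ∈ S with a < t, numSnakes (S.erase a) (-a) := by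
  rcases S.eq_empty_or_nonempty with rfl | hne
  · simp [numSnakes_empty]
  rw [numSnakes_eq_sum hS hne, numSnakes_zero hS hne, sum_filter, ← sum_add_distrib]
  refine sum_congr rfl fun a ha => ?_
  rw [if_pos (add_pos ht (hS a ha))]
  simp only [sub_pos]

theorem numSnakes_neg_add (hS : ∀ a ∈ S, 0 < a) (ht : 0 < t) (htS : t ∉ S) :
    numSnakes S (-t) + ∑ a ∈ S with a < t, numSnakes (S.erase a) a = numSnakes S 0 := by
  rcases S.eq_empty_or_nonempty with rfl | hne
  · simp [numSnakes_empty]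
  rw [numSnakes_eq_sum hS hne, numSnakes_zero hS hne, sum_filter, ← sum_add_distrib]
  refine sum_congr rfl fun a ha => ?_
  have := hS a ha
  have : ¬ 0 < -t - a := by grind
  rcases lt_or_gt_of_ne (ne_of_mem_of_not_mem ha htS) with hat | hta
  · have : ¬ 0 < -t + a := by grind
    simp [*]
  · have : 0 < -t + a := by grind
    simp [*, hta.not_gt]

variable (R : Type*) [Ring R]

theorem numSnakes_eq_sum_powerset (hS : ∀ a ∈ S, 0 < a) (ht : 0 < t) (htS : t ∉ S) :
    (numSnakes S t : R) = ∑ T ∈ (S.filter (· < t)).powerset,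
        (-1) ^ (#T / 2) * (numSnakes (S \ T) 0 : R) ∧
    (numSnakes S (-t) : R) = ∑ T ∈ (S.filter (· < t)).powerset,
        (-1) ^ ((#T + 1) / 2) * (numSnakes (S \ T) 0 : R) := by
  induction S using Finset.strongInduction generalizing t with
  | H S ih =>
    have expand_erase (a) (ha : a ∈ S.filter (· < t)) :=
      have haS := (mem_filter.1 ha).1
      ih _ (erase_ssubset haS) (fun b hb => hS b (mem_of_mem_erase hb)) (hS a haS)
        (notMem_erase a S)
    constructor
    · rw [numSnakes_of_pos hS ht, Nat.cast_add, Nat.cast_sum,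
        sum_congr rfl fun a ha => (expand_erase a ha).2,
        sum_powerset_mul_sdiff_eq_add_sum_max (fun k => (-1) ^ (k / 2))
          (fun U => (numSnakes U 0 : R)) (filter_subset _ _) (by grind)]
      simp
    · have hneg := congrArg (Nat.cast : ℕ → R) (numSnakes_neg_add hS ht htS)
      rw [Nat.cast_add, Nat.cast_sum, ← eq_sub_iff_add_eq,
        sum_congr rfl fun a ha => (expand_erase a ha).1] at hneg
      rw [hneg, sum_powerset_mul_sdiff_eq_add_sum_max (fun k => (-1) ^ ((k + 1) / 2))
          (fun U => (numSnakes U 0 : R)) (filter_subset _ _) (by grind)]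
      simp [add_assoc, pow_succ, sub_eq_add_neg]

theorem sum_powerset_neg_one_pow_mul_numSnakes (hS : ∀ a ∈ S, 0 < a) :
    ∑ T ∈ S.powerset, (-1) ^ ((#T + 1) / 2) * (numSnakes (S \ T) 0 : R) =
      if #S = 0 then 1 else 0 := by
  rcases S.eq_empty_or_nonempty with rfl | hne
  · simp [numSnakes_empty]
  have expand_erase (a) (ha : a ∈ S) := (numSnakes_eq_sum_powerset R
    (fun b hb => hS b (mem_of_mem_erase hb)) (hS a ha) (notMem_erase a S)).1
  rw [sum_powerset_mul_sdiff_eq_add_sum_max (fun k => (-1) ^ ((k + 1) / 2))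
    (fun U => (numSnakes U 0 : R)) subset_rfl fun _ _ b hb _ => hb, numSnakes_zero hS hne,
    Nat.cast_sum, sum_congr rfl expand_erase, if_neg hne.card_ne_zero]
  simp [add_assoc, pow_succ]

end Snakes

section AlternateSigns

/-- Negation of every other entry. It turns the alternating inequalities `x₁ > x₂ < x₃ > ⋯` into
the uniform condition that adjacent entries have positive sum. -/
def alternateSigns {α : Type*} [InvolutiveNeg α] (n : ℕ) : (Fin n → α) ≃ (Fin n → α) :=
  Equiv.piCongrRight fun i => if Even (i : ℕ) then Equiv.refl α else Equiv.neg α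

variable {α : Type*} [AddCommGroup α] [LinearOrder α] {n : ℕ}

theorem abs_alternateSigns_apply (x : Fin n → α) (i : Fin n) : |alternateSigns n x i| = |x i| := by
  by_cases hi : Even (i : ℕ) <;> simp [alternateSigns, hi]

theorem alternateSigns_add_alternateSigns_pos_iff [IsOrderedAddMonoid α]
    (x : Fin n → α) {i : ℕ} (h : i + 1 < n) :
    0 < alternateSigns n x ⟨i, Nat.lt_of_succ_lt h⟩ + alternateSigns n x ⟨i + 1, h⟩ ↔
      (Even i → x ⟨i + 1, h⟩ < x ⟨i, Nat.lt_of_succ_lt h⟩) ∧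
      (¬ Even i → x ⟨i, Nat.lt_of_succ_lt h⟩ < x ⟨i + 1, h⟩) := by
  by_cases hi : Even i <;> simp [alternateSigns, hi, Nat.even_add_one]

theorem isTypeBSnake_iff_isSnakeFrom_alternateSigns {x : Fin n → ℤ} :
    IsTypeBSnake n x ↔ IsSnakeFrom (Icc 1 (n : ℤ)) 0 (alternateSigns n x) := by
  refine and_congr (by simp [abs_alternateSigns_apply]) (and_congr ?_ ?_)
  · simp only [Function.Injective, Function.comp_apply, abs_alternateSigns_apply, abs_eq_abs]
    grind
  · cases n with
    | zero => simp
    | succ n =>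
      simp only [Fin.forall_fin_succ, Fin.forall_iff, ← Fin.succ_castSucc, Fin.cons_succ]
      refine and_congr (by simp [alternateSigns]) (forall_congr' fun i => ?_)
      exact ⟨fun h hi => (alternateSigns_add_alternateSigns_pos_iff x _).2 (h (by lia)),
        fun h hi => (alternateSigns_add_alternateSigns_pos_iff x _).1 (h (by lia))⟩

theorem springer_eq_numSnakes (n : ℕ) : springer n = numSnakes (Icc 1 (n : ℤ)) 0 := by
  rw [springer, ← card_isSnakeFrom_of_card_eq (n := n) (by simp)]
  exact Nat.card_congr ((alternateSigns n).subtypeEquiv fun _ =>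
    isTypeBSnake_iff_isSnakeFrom_alternateSigns)

end AlternateSigns

section Analysis

theorem sum_choose_mul_iteratedDeriv_mul_iteratedDeriv_inv {𝕜 𝕜' : Type*}
    [NontriviallyNormedField 𝕜] [NormedField 𝕜'] [NormedAlgebra 𝕜 𝕜'] {g : 𝕜 → 𝕜'} {x : 𝕜} {n : ℕ}
    (hg : ContDiffAt 𝕜 n g x) (hx : g x ≠ 0) :
    ∑ k ∈ range (n + 1), (n.choose k : 𝕜') * iteratedDeriv k g x * iteratedDeriv (n - k) g⁻¹ x =
      if n = 0 then 1 else 0 := by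
  have mul_inv_eventually : g * g⁻¹ =ᶠ[nhds x] fun _ => 1 :=
    (hg.continuousAt.eventually_ne hx).mono fun y hy => mul_inv_cancel₀ hy
  rw [← iteratedDeriv_mul hg (hg.inv hx), mul_inv_eventually.iteratedDeriv_eq, iteratedDeriv_const]

open Complex

theorem iteratedDeriv_cos_sub_sin_zero (k : ℕ) :
    iteratedDeriv k (cos - sin) 0 = (-1) ^ ((k + 1) / 2) := by
  rw [iteratedDeriv_sub contDiff_cos.contDiffAt contDiff_sin.contDiffAt]
  obtain ⟨m, rfl | rfl⟩ := k.even_or_odd'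
  · have : (2 * m + 1) / 2 = m := by omega
    simp [this]
  · have : (2 * m + 1 + 1) / 2 = m + 1 := by omega
    simp [this, pow_succ]

theorem cos_sub_sin_ne_zero {z : ℂ} (hz : ‖z‖ < Real.pi / 4) : cos z - sin z ≠ 0 := by
  intro h
  -- `cos z - sin z = √2 * sin (π / 4 - z)`
  have sin_eq_zero : sin ((Real.pi / 4 : ℝ) - z) = 0 := by
    rw [sin_sub, ← ofReal_sin, ← ofReal_cos, Real.sin_pi_div_four, Real.cos_pi_div_four, ← mul_sub,
      h, mul_zero]
  obtain ⟨k, hk⟩ := sin_eq_zero_iff.1 sin_eq_zero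
  have hzk : z = ((Real.pi / 4 - k * Real.pi : ℝ) : ℂ) := by
    push_cast at hk ⊢
    linear_combination -hk
  rw [hzk, norm_real, Real.norm_eq_abs, abs_lt] at hz
  have k_pos : (0 : ℝ) < k := by nlinarith [Real.pi_pos]
  have k_lt_one : (k : ℝ) < 1 := by nlinarith [Real.pi_pos]
  norm_cast at k_pos k_lt_one
  lia

theorem numSnakes_zero_eq_iteratedDeriv {α : Type*} [AddCommGroup α] [LinearOrder α]
    [IsOrderedAddMonoid α] {S : Finset α} (hS : ∀ a ∈ S, 0 < a) :
    (numSnakes S 0 : ℂ) = iteratedDeriv #S (cos - sin)⁻¹ 0 := by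
  refine eq_of_sum_powerset_mul_sdiff_eq (c := fun T => (-1) ^ ((#T + 1) / 2))
    (φ := fun U => (numSnakes U 0 : ℂ)) (ψ := fun U => iteratedDeriv #U (cos - sin)⁻¹ 0)
    (by simpa using (isRegular_one (R := ℂ)).left) fun U hU => ?_
  have hg : ContDiffAt ℂ (#U) (cos - sin) 0 := (contDiff_cos.sub contDiff_sin).contDiffAt
  rw [sum_powerset_neg_one_pow_mul_numSnakes ℂ fun a ha => hS a (hU ha),
    ← sum_choose_mul_iteratedDeriv_mul_iteratedDeriv_inv hg (by simp)]
  simp_rw [mul_assoc, ← nsmul_eq_mul, iteratedDeriv_cos_sub_sin_zero]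
  rw [← sum_powerset_apply_card fun k =>
    (-1 : ℂ) ^ ((k + 1) / 2) * iteratedDeriv (#U - k) (cos - sin)⁻¹ 0]
  exact sum_congr rfl fun T hT => by rw [card_sdiff_of_subset (mem_powerset.1 hT)]

theorem iteratedDeriv_inv_cos_sub_sin_zero (n : ℕ) :
    iteratedDeriv n (cos - sin)⁻¹ 0 = (springer n : ℂ) := by
  have hpos : ∀ a ∈ Icc 1 (n : ℤ), 0 < a := fun a ha => zero_lt_one.trans_le (mem_Icc.1 ha).1
  rw [springer_eq_numSnakes, numSnakes_zero_eq_iteratedDeriv hpos, Int.card_Icc,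
    add_sub_cancel_right, Int.toNat_natCast]

theorem springer_egf_general {z : ℂ} (hz : ‖z‖ < Real.pi / 4) :
    HasSum (fun n : ℕ => (springer n : ℂ) * z ^ n / (n.factorial : ℂ)) (1 / (cos z - sin z)) := by
  have hdiff : DifferentiableOn ℂ (cos - sin)⁻¹ (Metric.ball 0 (Real.pi / 4)) :=
    (differentiable_cos.sub differentiable_sin).differentiableOn.inv
      fun _ hw => cos_sub_sin_ne_zero (mem_ball_zero_iff.1 hw)
  rw [one_div]
  refine (hasSum_taylorSeries_on_ball hdiff (mem_ball_zero_iff.2 hz)).congr_fun fun n => ?_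
  rw [iteratedDeriv_inv_cos_sub_sin_zero, smul_eq_mul, smul_eq_mul, sub_zero]
  ring

end Analysis

/-- The exponential generating function of the Springer numbers (the numbers of
type-`B` snakes) is `1/(cos x - sin x)`:  `∑ b_n x^n/n! = 1/(cos x - sin x)`. -/
theorem springer_egf (x : ℝ) (hx : |x| < Real.pi / 4) :
    HasSum (fun n : ℕ => (springer n : ℝ) * x ^ n / (n.factorial : ℝ))
      (1 / (Real.cos x - Real.sin x)) := by
  exact_mod_cast springer_egf_general (z := x) (by simpa using hx)
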